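/- For every integer n ≥ 4 there exists an n-dimensional real normed space X such that for every (n-1)-dimensional subspace Y of X and every linear projection P : X → Y one has ‖P‖ > 1 + (2(n+3)²)^{-100(n+3)²}. -/

import Mathlib

/-- `X` is an `n`-dimensional normed space in which every linear projection onto every
`(n-1)`-dimensional subspace has norm greater than `1 + (2(n+3)²)^{-100(n+3)²}`. -/
def NoAlmostMinimalHyperplaneProjection (n : ℕ) (X : Type)
    [NormedAddCommGroup X] [NormedSpace ℝ X] : Prop :=
  Module.finrank ℝ X = n ∧
  ∀ Y : Submodule ℝ X, Module.finrank ℝ Y = n - 1 →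
    ∀ P : X →L[ℝ] X, (∀ x, P x ∈ Y) → (∀ y ∈ Y, P y = y) →
      1 + ((2 * ((n : ℝ) + 3) ^ 2) ^ (100 * (n + 3) ^ 2))⁻¹ < ‖P‖

/-!
The space consists of the polynomials of degree less than `n`, normed by the `ℓ^q` norm of their
values at `n + 2` nodes for an even exponent `q`. If the norm of a projection onto a hyperplane `Y`
is close to one, then a vector `z` of its kernel is almost Birkhoff orthogonal to `Y`, that is,
the norm is almost stationary in the direction `z` at every point of `Y`. The derivative of `‖·‖^q`
there is `q ∑ j, c j z * c j y ^ (q - 1)`, where the `c j` are the evaluations, so this sum is small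
for all `y ∈ Y`, and by polarization so is `∑ j, c j z * ∏ k, c j (w k)` for `w k ∈ Y`. If vectors
of `Y` separate `c i` from each other `c j`, a product of them shows that `c i z` itself is small.
A comparison of the Lagrange bases of all `n`-sets of nodes shows that at most two indices `i`
cannot be isolated in this way, and as the values at the remaining `n` nodes determine `z`, the
vector `z` would be small in every coordinate.
-/

open Finset Module
open scoped Nat

section Polarization

theorem sum_Ici_neg_one_pow_card_of_ne_univ {κ R : Type*} [Fintype κ] [DecidableEq κ]
    [CommRing R] {T : Finset κ} (hT : T ≠ univ) : ∑ S ∈ Ici T, (-1 : R) ^ #S = 0 := by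
  have hne : (univ \ T).Nonempty := sdiff_nonempty.2 fun h => hT (univ_subset_iff.1 h)
  have hzero : ∑ U ∈ (univ \ T).powerset, (-1 : R) ^ #U = 0 := by
    exact_mod_cast congrArg (Int.cast : ℤ → R) (sum_powerset_neg_one_pow_card_of_nonempty hne)
  have hdisj : ∀ U ∈ (univ \ T).powerset, Disjoint T U := fun U hU =>
    disjoint_sdiff.mono_right (mem_powerset.1 hU)
  calc ∑ S ∈ Ici T, (-1 : R) ^ #S
      = ∑ S ∈ (univ \ T).powerset.image (T ∪ ·), (-1 : R) ^ #S := by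
        rw [← Icc_eq_image_powerset (subset_univ T)]; rfl
    _ = ∑ U ∈ (univ \ T).powerset, (-1 : R) ^ #(T ∪ U) := by
        refine sum_image fun U hU V hV hUV => ?_
        rw [← union_sdiff_cancel_left (hdisj U hU), ← union_sdiff_cancel_left (hdisj V hV), hUV]
    _ = (-1) ^ #T * ∑ U ∈ (univ \ T).powerset, (-1 : R) ^ #U := by
        rw [mul_sum]
        exact sum_congr rfl fun U hU => by rw [card_union_of_disjoint (hdisj U hU), pow_add]
    _ = 0 := by rw [hzero, mul_zero]

-- Expand the powers over maps `g : κ → κ`: the coefficient of a map is the alternating sum over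
-- the sets containing its image, so only the bijections survive.
theorem sum_neg_one_pow_card_mul_sum_pow_card {κ R : Type*} [Fintype κ] [CommRing R]
    (a : κ → R) :
    ∑ S : Finset κ, (-1) ^ #S * (∑ k ∈ S, a k) ^ Fintype.card κ
      = (-1) ^ Fintype.card κ * ((Fintype.card κ)! * ∏ k, a k) := by
  classical
  have hexpand (S : Finset κ) : (∑ k ∈ S, a k) ^ Fintype.card κ
      = ∑ g : κ → κ, if univ.image g ⊆ S then ∏ k, a (g k) else 0 := by
    have h := prod_univ_sum (fun _ : κ => S) (fun _ => a)
    rw [prod_const, card_univ] at h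
    rw [h, ← sum_filter]
    refine sum_congr ?_ fun _ _ => rfl
    ext g
    simp [image_subset_iff]
  have hcoeff (g : κ → κ) :
      ∑ S : Finset κ, (-1) ^ #S * (if univ.image g ⊆ S then ∏ k, a (g k) else 0)
        = (∑ S ∈ Ici (univ.image g), (-1) ^ #S) * ∏ k, a (g k) := by
    simp only [mul_ite, mul_zero, ← sum_filter, sum_mul]
    exact sum_congr (by ext; simp) fun _ _ => rfl
  have hvanish (g : κ → κ) (hg : g ∉ Set.range ((⇑) : Equiv.Perm κ → κ → κ)) :
      (∑ S ∈ Ici (univ.image g), (-1) ^ #S) * ∏ k, a (g k) = 0 := by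
    rw [sum_Ici_neg_one_pow_card_of_ne_univ, zero_mul]
    intro h
    have hsurj : Function.Surjective g := fun k => by
      simpa using eq_univ_iff_forall.1 h k
    exact hg ⟨Equiv.ofBijective g (Finite.surjective_iff_bijective.1 hsurj), rfl⟩
  have hperm (σ : Equiv.Perm κ) : (-1) ^ Fintype.card κ * ∏ k, a k
      = (∑ S ∈ Ici (univ.image σ), (-1) ^ #S) * ∏ k, a (σ k) := by
    have huniv : Ici (univ : Finset κ) = {univ} := Ici_top
    rw [image_univ_equiv, huniv, sum_singleton, card_univ, Equiv.prod_comp σ a]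
  calc ∑ S : Finset κ, (-1) ^ #S * (∑ k ∈ S, a k) ^ Fintype.card κ
      = ∑ g : κ → κ, (∑ S ∈ Ici (univ.image g), (-1) ^ #S) * ∏ k, a (g k) := by
        simp only [hexpand, mul_sum, ← hcoeff]
        exact sum_comm
    _ = ∑ _σ : Equiv.Perm κ, (-1) ^ Fintype.card κ * ∏ k, a k :=
        (Fintype.sum_of_injective _ DFunLike.coe_injective _ _ hvanish hperm).symm
    _ = (-1) ^ Fintype.card κ * ((Fintype.card κ)! * ∏ k, a k) := by
        rw [sum_const, card_univ, Fintype.card_perm, nsmul_eq_mul]; ring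

end Polarization

theorem abs_add_pow_sub_sub_le {x s B : ℝ} (hx : |x| ≤ B) (hxs : |x + s| ≤ B) (p : ℕ) :
    |(x + s) ^ (p + 2) - x ^ (p + 2) - (p + 2) * s * x ^ (p + 1)|
      ≤ (p + 2).choose 2 * B ^ p * s ^ 2 := by
  induction p with
  | zero =>
    have hsq : (x + s) ^ (0 + 2) - x ^ (0 + 2) - ((0 : ℕ) + 2) * s * x ^ (0 + 1) = s ^ 2 := by
      push_cast; ring
    rw [hsq, abs_of_nonneg (sq_nonneg s)]
    simp
  | succ p ih =>
    have hB : 0 ≤ B := (abs_nonneg x).trans hx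
    have hchoose : ((p + 1 + 2).choose 2 : ℝ) = (p + 2) + (p + 2).choose 2 := by
      rw [Nat.choose_succ_succ' (p + 2) 1, Nat.choose_one_right]; push_cast; ring
    have hpow : |x ^ (p + 1)| ≤ B ^ (p + 1) := by rw [abs_pow]; gcongr
    calc |(x + s) ^ (p + 1 + 2) - x ^ (p + 1 + 2) - ((p + 1 : ℕ) + 2) * s * x ^ (p + 1 + 1)|
        = |(x + s) * ((x + s) ^ (p + 2) - x ^ (p + 2) - (p + 2) * s * x ^ (p + 1))
            + (p + 2) * x ^ (p + 1) * s ^ 2| := by congr 1; push_cast; ring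
      _ ≤ |x + s| * |(x + s) ^ (p + 2) - x ^ (p + 2) - (p + 2) * s * x ^ (p + 1)|
            + (p + 2) * |x ^ (p + 1)| * s ^ 2 := by
          refine (abs_add_le _ _).trans_eq ?_
          rw [abs_mul, abs_mul, abs_mul, abs_of_nonneg (by positivity : (0 : ℝ) ≤ p + 2),
            abs_of_nonneg (sq_nonneg s)]
      _ ≤ B * ((p + 2).choose 2 * B ^ p * s ^ 2) + (p + 2) * B ^ (p + 1) * s ^ 2 := by gcongr
      _ = (p + 1 + 2).choose 2 * B ^ (p + 1) * s ^ 2 := by rw [hchoose]; ring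

/-- `y` is Birkhoff orthogonal to `z` up to the factor `C`: moving `y` along `z` can shorten it
at most by the factor `C`. For `C = 1` this is Birkhoff orthogonality. -/
def BirkhoffOrthogonalUpTo {X : Type*} [SeminormedAddCommGroup X] [NormedSpace ℝ X]
    (C : ℝ) (y z : X) : Prop :=
  ∀ t : ℝ, ‖y‖ ≤ C * ‖y + t • z‖

theorem birkhoffOrthogonalUpTo_of_opNorm_le {X : Type*} [SeminormedAddCommGroup X]
    [NormedSpace ℝ X] {P : X →L[ℝ] X} {C : ℝ} (hP : ‖P‖ ≤ C) {y z : X} (hy : P y = y)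
    (hz : P z = 0) : BirkhoffOrthogonalUpTo C y z := fun t => by
  simpa [hy, hz] using P.le_of_opNorm_le hP (y + t • z)

theorem BirkhoffOrthogonalUpTo.one_sub_mul_norm_pow_le {X : Type*} [SeminormedAddCommGroup X]
    [NormedSpace ℝ X] {ε : ℝ} (hε : ε ≤ 1) {y z : X}
    (h : BirkhoffOrthogonalUpTo (1 + ε) y z) (t : ℝ) (k : ℕ) :
    (1 - k * ε) * ‖y‖ ^ k ≤ ‖y + t • z‖ ^ k := by
  have hbernoulli : 1 - k * ε ≤ (1 - ε) ^ k := by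
    simpa [sub_eq_add_neg] using one_add_mul_le_pow (a := -ε) (by linarith) k
  have hnorm : (1 - ε) * ‖y‖ ≤ ‖y + t • z‖ := by
    nlinarith [mul_le_mul_of_nonneg_left (h t) (sub_nonneg.2 hε),
      mul_nonneg (sq_nonneg ε) (norm_nonneg (y + t • z))]
  calc (1 - k * ε) * ‖y‖ ^ k ≤ (1 - ε) ^ k * ‖y‖ ^ k := by gcongr
    _ = ((1 - ε) * ‖y‖) ^ k := (mul_pow ..).symm
    _ ≤ ‖y + t • z‖ ^ k := by gcongr

/-- The norm of `X` is the `ℓ^q` norm of the coordinates `c`, for an exponent `q` (even, in the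
application) that makes absolute values unnecessary. -/
def IsPowerSumNorm {X ι : Type*} [SeminormedAddCommGroup X] [NormedSpace ℝ X] [Fintype ι]
    (c : ι → Dual ℝ X) (q : ℕ) : Prop :=
  ∀ x, ‖x‖ ^ q = ∑ j, c j x ^ q

/-- The factor `K` for which `abs_sum_mul_prod_le` bounds, by `τ * K`, the polarized derivative of
an `ℓ^(p+2)` norm in `m` coordinates at vectors with coordinates of size at most `R`. -/
def polarizationConst (m p : ℕ) (R : ℝ) : ℝ :=
  2 ^ (p + 1) * (m * ((p + 2) * ((p + 1) * R + 1) ^ (p + 2)))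

theorem polarizationConst_nonneg (m p : ℕ) {R : ℝ} (hR : 0 ≤ R) :
    0 ≤ polarizationConst m p R := by
  rw [polarizationConst]
  positivity

namespace IsPowerSumNorm

variable {X ι : Type*} [SeminormedAddCommGroup X] [NormedSpace ℝ X] [Fintype ι]
  {c : ι → Dual ℝ X} {p : ℕ} {z : X} {τ : ℝ}

theorem norm_pow_le {q : ℕ} (hc : IsPowerSumNorm c q) {y : X} {B : ℝ}
    (hy : ∀ j, |c j y| ≤ B) : ‖y‖ ^ q ≤ Fintype.card ι * B ^ q := by
  rw [hc, ← nsmul_eq_mul, ← card_univ]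
  refine sum_le_card_nsmul _ _ _ fun j _ => (le_abs_self _).trans ?_
  rw [abs_pow]
  gcongr
  exact hy j

theorem norm_add_smul_pow_le (hc : IsPowerSumNorm c (p + 2)) {y : X} {B t : ℝ}
    (hy : ∀ j, |c j y| ≤ B) (hz : ∀ j, |c j z| ≤ 1) (ht : |t| ≤ 1) :
    ‖y + t • z‖ ^ (p + 2) ≤ ‖y‖ ^ (p + 2) + (p + 2) * t * ∑ j, c j z * c j y ^ (p + 1)
      + Fintype.card ι * ((p + 2).choose 2 * (B + 1) ^ p * t ^ 2) := by
  have hcoord (j : ι) : (c j y + t * c j z) ^ (p + 2) ≤ c j y ^ (p + 2)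
      + (p + 2) * t * (c j z * c j y ^ (p + 1)) + (p + 2).choose 2 * (B + 1) ^ p * t ^ 2 := by
    have hB : 0 ≤ B := (abs_nonneg _).trans (hy j)
    have htz : |t * c j z| ≤ 1 := by
      rw [abs_mul]
      exact mul_le_one₀ ht (abs_nonneg _) (hz j)
    have htz_sq : (t * c j z) ^ 2 ≤ t ^ 2 := by
      rw [mul_pow]
      exact mul_le_of_le_one_right (sq_nonneg t) ((sq_le_one_iff_abs_le_one _).2 (hz j))
    have htaylor := (abs_le.1 (abs_add_pow_sub_sub_le ((hy j).trans (le_add_of_nonneg_right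
      zero_le_one)) ((abs_add_le _ _).trans (add_le_add (hy j) htz)) p)).2
    have hrem : ((p + 2).choose 2 : ℝ) * (B + 1) ^ p * (t * c j z) ^ 2
        ≤ (p + 2).choose 2 * (B + 1) ^ p * t ^ 2 := by gcongr
    linarith
  calc ‖y + t • z‖ ^ (p + 2) = ∑ j, (c j y + t * c j z) ^ (p + 2) := by simp [hc (y + t • z)]
    _ ≤ ∑ j, (c j y ^ (p + 2) + (p + 2) * t * (c j z * c j y ^ (p + 1))
          + (p + 2).choose 2 * (B + 1) ^ p * t ^ 2) := sum_le_sum fun j _ => hcoord j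
    _ = _ := by
        rw [sum_add_distrib, sum_add_distrib, ← hc, ← mul_sum, sum_const, card_univ, nsmul_eq_mul]

-- Along `y ± τ • z` the norm barely drops, whereas its derivative at `y` in the direction `z` is a
-- multiple of the sum below.
theorem abs_sum_mul_pow_le (hc : IsPowerSumNorm c (p + 2)) {y : X} {B : ℝ} (hB : 0 ≤ B)
    (hy : ∀ j, |c j y| ≤ B) (hz : ∀ j, |c j z| ≤ 1) (hτ₀ : 0 < τ) (hτ₁ : τ ≤ 1)
    (h : BirkhoffOrthogonalUpTo (1 + τ ^ 2) y z) :
    |∑ j, c j z * c j y ^ (p + 1)|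
      ≤ τ * (Fintype.card ι * ((p + 2) * (B + 1) ^ (p + 2))) := by
  set G := ∑ j, c j z * c j y ^ (p + 1)
  set m : ℝ := (Fintype.card ι : ℝ)
  have hone_side (t : ℝ) (ht : |t| = τ) :
      -(t * G) ≤ τ ^ 2 * (m * ((p + 2) * (B + 1) ^ (p + 2))) := by
    have htτ : t ^ 2 = τ ^ 2 := by rw [← ht, sq_abs]
    have hlower := h.one_sub_mul_norm_pow_le (pow_le_one₀ hτ₀.le hτ₁) t (p + 2)
    have hupper := hc.norm_add_smul_pow_le hy hz (ht.trans_le hτ₁)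
    have hnorm : ‖y‖ ^ (p + 2) ≤ m * (B + 1) ^ (p + 2) :=
      hc.norm_pow_le fun j => (hy j).trans (le_add_of_nonneg_right zero_le_one)
    have hrem : ((p + 2).choose 2 : ℝ) * (B + 1) ^ p
        ≤ ((p + 2) * (p + 1)) * (B + 1) ^ (p + 2) := by
      have hchoose : ((p + 2).choose 2 : ℝ) ≤ (p + 2) * (p + 1) := by
        exact_mod_cast (Nat.choose_two_right (p + 2)).trans_le (Nat.div_le_self _ _)
      gcongr
      · linarith
      · omega
    have hscaled : (p + 2) * -(t * G)
        ≤ (p + 2) * (τ ^ 2 * (m * ((p + 2) * (B + 1) ^ (p + 2)))) := by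
      calc (p + 2) * -(t * G)
          ≤ (p + 2) * τ ^ 2 * ‖y‖ ^ (p + 2)
            + m * (((p + 2).choose 2 * (B + 1) ^ p) * τ ^ 2) := by
            push_cast at hlower
            rw [htτ] at hupper
            linarith
        _ ≤ (p + 2) * τ ^ 2 * (m * (B + 1) ^ (p + 2))
            + m * (((p + 2) * (p + 1)) * (B + 1) ^ (p + 2) * τ ^ 2) := by gcongr
        _ = _ := by ring
    exact le_of_mul_le_mul_left hscaled (by positivity)
  refine le_of_mul_le_mul_left ?_ hτ₀
  rw [← mul_assoc, ← sq, ← abs_of_pos hτ₀, ← abs_mul, abs_of_pos hτ₀]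
  refine abs_le'.2 ⟨?_, hone_side τ (abs_of_pos hτ₀)⟩
  simpa using hone_side (-τ) (by rw [abs_neg, abs_of_pos hτ₀])

theorem abs_sum_mul_prod_le (hc : IsPowerSumNorm c (p + 2)) {Y : Submodule ℝ X} {R : ℝ}
    (hR : 0 ≤ R) (hz : ∀ j, |c j z| ≤ 1) (hτ₀ : 0 < τ) (hτ₁ : τ ≤ 1)
    (hY : ∀ y ∈ Y, BirkhoffOrthogonalUpTo (1 + τ ^ 2) y z) {w : Fin (p + 1) → X}
    (hwY : ∀ k, w k ∈ Y) (hwR : ∀ k j, |c j (w k)| ≤ R) :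
    |∑ j, c j z * ∏ k, c j (w k)| ≤ τ * polarizationConst (Fintype.card ι) p R := by
  set bound : ℝ := τ * (Fintype.card ι * ((p + 2) * ((p + 1) * R + 1) ^ (p + 2)))
  have hsub (S : Finset (Fin (p + 1))) : |∑ j, c j z * c j (∑ k ∈ S, w k) ^ (p + 1)| ≤ bound := by
    refine hc.abs_sum_mul_pow_le (by positivity) (fun j => ?_) hz hτ₀ hτ₁
      (hY _ (Y.sum_mem fun k _ => hwY k))
    calc |c j (∑ k ∈ S, w k)| ≤ ∑ k ∈ S, |c j (w k)| := by
          rw [map_sum]; exact abs_sum_le_sum_abs _ _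
      _ ≤ #S * R := by
          rw [← nsmul_eq_mul]; exact sum_le_card_nsmul _ _ _ fun k _ => hwR k j
      _ ≤ (p + 1) * R := by
          gcongr
          exact_mod_cast (card_le_univ S).trans_eq (Fintype.card_fin _)
  have hpolar : (-1) ^ (p + 1) * ((p + 1)! * ∑ j, c j z * ∏ k, c j (w k))
      = ∑ S : Finset (Fin (p + 1)), (-1) ^ #S * ∑ j, c j z * c j (∑ k ∈ S, w k) ^ (p + 1) := by
    have hj (j : ι) := sum_neg_one_pow_card_mul_sum_pow_card fun k => c j (w k)
    simp only [Fintype.card_fin] at hj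
    simp only [mul_sum, map_sum]
    rw [sum_comm]
    refine sum_congr rfl fun j _ => ?_
    simp only [mul_left_comm _ (c j z), ← mul_sum, hj]
  calc |∑ j, c j z * ∏ k, c j (w k)|
      ≤ (p + 1)! * |∑ j, c j z * ∏ k, c j (w k)| :=
        le_mul_of_one_le_left (abs_nonneg _) (by exact_mod_cast (p + 1).factorial_pos)
    _ = |∑ S : Finset (Fin (p + 1)),
          (-1) ^ #S * ∑ j, c j z * c j (∑ k ∈ S, w k) ^ (p + 1)| := by
        rw [← hpolar, abs_mul, abs_neg_one_pow, one_mul, abs_mul, Nat.abs_cast]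
    _ ≤ ∑ _S : Finset (Fin (p + 1)), bound := by
        refine (abs_sum_le_sum_abs _ _).trans (sum_le_sum fun S _ => ?_)
        simpa only [abs_mul, abs_neg_one_pow, one_mul] using hsub S
    _ = τ * polarizationConst (Fintype.card ι) p R := by
        simp only [sum_const, card_univ, Fintype.card_finset, Fintype.card_fin, nsmul_eq_mul,
          polarizationConst, bound]
        push_cast; ring

end IsPowerSumNorm

/-- The functional `c i` can be isolated from each other `c j` by a vector of `Y` whose coordinates
are at most `R`. -/
def IsIsolatedOn {X ι : Type*} [AddCommGroup X] [Module ℝ X] (c : ι → Dual ℝ X)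
    (Y : Submodule ℝ X) (R : ℝ) (i : ι) : Prop :=
  ∀ j ≠ i, ∃ v ∈ Y, c i v = 1 ∧ c j v = 0 ∧ ∀ l, |c l v| ≤ R

theorem IsPowerSumNorm.abs_apply_le_of_isIsolatedOn {X ι : Type*} [SeminormedAddCommGroup X]
    [NormedSpace ℝ X] [Fintype ι] [Nontrivial ι] {c : ι → Dual ℝ X} {p : ℕ}
    (hc : IsPowerSumNorm c (p + 2)) (hι : Fintype.card ι ≤ p + 2) {Y : Submodule ℝ X} {R : ℝ}
    (hR : 0 ≤ R) {z : X} {τ : ℝ} (hz : ∀ j, |c j z| ≤ 1) (hτ₀ : 0 < τ) (hτ₁ : τ ≤ 1)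
    (hY : ∀ y ∈ Y, BirkhoffOrthogonalUpTo (1 + τ ^ 2) y z) {i : ι} (hi : IsIsolatedOn c Y R i) :
    |c i z| ≤ τ * polarizationConst (Fintype.card ι) p R := by
  classical
  choose v hvY hv_self hv_zero hvR using fun j : {j // j ≠ i} => hi j j.2
  obtain ⟨g, hg⟩ : ∃ g : Fin (p + 1) → {j // j ≠ i}, Function.Surjective g := by
    obtain ⟨g⟩ : Nonempty ({j // j ≠ i} ↪ Fin (p + 1)) := by
      refine Function.Embedding.nonempty_of_card_le ?_
      have hlt : Fintype.card {j // j ≠ i} < Fintype.card ι :=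
        Fintype.card_subtype_lt (not_not.2 rfl : ¬ i ≠ i)
      rw [Fintype.card_fin]
      omega
    have : Nonempty {j // j ≠ i} := nonempty_subtype.2 (exists_ne i)
    exact ⟨_, Function.invFun_surjective g.injective⟩
  have hsingle : ∑ j, c j z * ∏ k, c j (v (g k)) = c i z := by
    rw [Fintype.sum_eq_single i fun j hj => ?_]
    · simp [hv_self]
    · obtain ⟨k, hk⟩ := hg ⟨j, hj⟩
      rw [prod_eq_zero (mem_univ k) (by rw [hk]; exact hv_zero ⟨j, hj⟩), mul_zero]
  rw [← hsingle]
  exact hc.abs_sum_mul_prod_le hR hz hτ₀ hτ₁ hY (fun k => hvY _) fun k => hvR _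

section Dominance

variable {ι α : Type*} [Preorder α]

/-- For a family of scores `F A : ι → α` indexed by sets `A`, `i` outscores every element, other
than itself and `j`, of every `n`-set containing `i` and `j`. -/
def DominatesExcept (n : ℕ) (F : Finset ι → ι → α) (i j : ι) : Prop :=
  ∀ A : Finset ι, #A = n → i ∈ A → j ∈ A → ∀ k ∈ A, k ≠ i → k ≠ j → F A k < F A i

variable [Fintype ι] {n : ℕ} {F : Finset ι → ι → α}

theorem DominatesExcept.eq_or_eq (hn : 4 ≤ n) (hι : n ≤ Fintype.card ι) {i j i' j' : ι}
    (h : DominatesExcept n F i j) (h' : DominatesExcept n F i' j') (hne : i ≠ i') :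
    i = j' ∨ i' = j := by
  classical
  by_contra! hcon
  obtain ⟨A, hA, hcard⟩ := exists_superset_card_eq (s := {i, j, i', j'})
    (card_le_four.trans hn) hι
  simp only [insert_subset_iff, singleton_subset_iff] at hA
  obtain ⟨hi, hj, hi', hj'⟩ := hA
  exact lt_asymm (h A hcard hi hj i' hi' hne.symm hcon.2) (h' A hcard hi' hj' i hi hne hcon.1)

theorem DominatesExcept.not_cyclic (hn : 3 ≤ n) (hι : n ≤ Fintype.card ι) {i j k : ι}
    (hij : i ≠ j) (hjk : j ≠ k) (hki : k ≠ i) (hi : DominatesExcept n F i j)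
    (hj : DominatesExcept n F j k) : ¬ DominatesExcept n F k i := fun hk => by
  classical
  obtain ⟨A, hA, hcard⟩ := exists_superset_card_eq (s := {i, j, k}) (card_le_three.trans hn) hι
  simp only [insert_subset_iff, singleton_subset_iff] at hA
  obtain ⟨hiA, hjA, hkA⟩ := hA
  have hk_lt_i := hi A hcard hiA hjA k hkA hki hjk.symm
  have hi_lt_j := hj A hcard hjA hkA i hiA hij hki.symm
  have hj_lt_k := hk A hcard hkA hiA j hjA hjk hij.symm
  exact lt_asymm hk_lt_i (hi_lt_j.trans hj_lt_k)

theorem card_le_two_of_dominatesExcept (hn : 4 ≤ n) (hι : n ≤ Fintype.card ι) {s : Finset ι}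
    (hs : ∀ i ∈ s, ∃ j, DominatesExcept n F i j) : #s ≤ 2 := by
  by_contra! hcard
  obtain ⟨a, b, d, ha, hb, hd, hab, had, hbd⟩ := two_lt_card_iff.1 hcard
  obtain ⟨a', ha'⟩ := hs a ha
  obtain ⟨b', hb'⟩ := hs b hb
  obtain ⟨d', hd'⟩ := hs d hd
  have hcycle : (a' = b ∧ b' = d ∧ d' = a) ∨ (a' = d ∧ d' = b ∧ b' = a) := by
    grind [ha'.eq_or_eq hn hι hb' hab, ha'.eq_or_eq hn hι hd' had, hb'.eq_or_eq hn hι hd' hbd]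
  have hn3 : 3 ≤ n := by omega
  rcases hcycle with ⟨rfl, rfl, rfl⟩ | ⟨rfl, rfl, rfl⟩
  · exact ha'.not_cyclic hn3 hι hab hbd had.symm hb' hd'
  · exact ha'.not_cyclic hn3 hι had hbd.symm hab.symm hd' hb'

end Dominance

section DualSystem

variable {X ι : Type*} [AddCommGroup X] [Module ℝ X] {c : ι → Dual ℝ X} {R : ℝ}

/-- The functionals `c k`, `k ∈ A`, are a basis of the dual of `X` with predual basis `e k`,
`k ∈ A`, at whose vectors all functionals `c l` are at most `R`. The values of `e` outside `A` are
irrelevant. -/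
structure IsDualSystem (c : ι → Dual ℝ X) (A : Finset ι) (R : ℝ) (e : ι → X) : Prop where
  apply_self : ∀ k ∈ A, c k (e k) = 1
  apply_of_ne : ∀ k ∈ A, ∀ l ∈ A, l ≠ k → c l (e k) = 0
  sum_smul : ∀ x, ∑ k ∈ A, c k x • e k = x
  abs_apply_le : ∀ k ∈ A, ∀ l, |c l (e k)| ≤ R

theorem IsDualSystem.map {X' : Type*} [AddCommGroup X'] [Module ℝ X'] {c' : ι → Dual ℝ X'}
    {A : Finset ι} {e : ι → X} (h : IsDualSystem c A R e) (T : X ≃ₗ[ℝ] X')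
    (hT : ∀ l x, c' l (T x) = c l x) : IsDualSystem c' A R (T ∘ e) where
  apply_self k hk := by simpa [hT] using h.apply_self k hk
  apply_of_ne k hk l hl hlk := by simpa [hT] using h.apply_of_ne k hk l hl hlk
  sum_smul x := by
    obtain ⟨x, rfl⟩ := T.surjective x
    simpa [hT] using congrArg T (h.sum_smul x)
  abs_apply_le k hk l := by simpa [hT] using h.abs_apply_le k hk l

theorem IsDualSystem.abs_apply_le_of_forall_mem {A : Finset ι} {e : ι → X}
    (h : IsDualSystem c A R e) {x : X} {δ : ℝ} (hδ : ∀ k ∈ A, |c k x| ≤ δ) (l : ι) :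
    |c l x| ≤ #A * (δ * R) := by
  calc |c l x| = |∑ k ∈ A, c k x * c l (e k)| := by
        conv_lhs => rw [← h.sum_smul x]
        simp
    _ ≤ ∑ k ∈ A, |c k x * c l (e k)| := abs_sum_le_sum_abs _ _
    _ ≤ #A * (δ * R) := by
        rw [← nsmul_eq_mul]
        refine sum_le_card_nsmul _ _ _ fun k hk => ?_
        rw [abs_mul]
        exact mul_le_mul (hδ k hk) (h.abs_apply_le k hk l) (abs_nonneg _)
          ((abs_nonneg _).trans (hδ k hk))

-- If `f` is not smaller at `e k` than at `e i`, then `e i - s • e k` is in its kernel for some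
-- `|s| ≤ 1`.
theorem IsDualSystem.exists_mem_ker_of_abs_le {A : Finset ι} {e : ι → X}
    (h : IsDualSystem c A R e) (f : Dual ℝ X) {i j k : ι} (hi : i ∈ A) (hj : j ∈ A) (hk : k ∈ A)
    (hji : j ≠ i) (hki : k ≠ i) (hkj : k ≠ j) (hf : |f (e i)| ≤ |f (e k)|) :
    ∃ v ∈ LinearMap.ker f, c i v = 1 ∧ c j v = 0 ∧ ∀ l, |c l v| ≤ 2 * R := by
  obtain ⟨s, hs, hsf⟩ : ∃ s : ℝ, |s| ≤ 1 ∧ f (e i) = s * f (e k) := by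
    by_cases hzero : f (e k) = 0
    · exact ⟨0, by simp, by simpa [hzero] using hf⟩
    · exact ⟨f (e i) / f (e k), by rw [abs_div]; exact div_le_one_of_le₀ hf (abs_nonneg _),
        (div_mul_cancel₀ _ hzero).symm⟩
  refine ⟨e i - s • e k, by simp [hsf], ?_, ?_, fun l => ?_⟩
  · simp [h.apply_self i hi, h.apply_of_ne k hk i hi hki.symm]
  · simp [h.apply_of_ne i hi j hj hji, h.apply_of_ne k hk j hj hkj.symm]
  · calc |c l (e i - s • e k)| ≤ |c l (e i)| + |s| * |c l (e k)| := by
          rw [map_sub, map_smul, smul_eq_mul, ← abs_mul]; exact abs_sub _ _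
      _ ≤ R + 1 * R := by
          gcongr
          · exact h.abs_apply_le i hi l
          · exact h.abs_apply_le k hk l
      _ = 2 * R := by ring

theorem exists_finset_forall_isIsolatedOn_ker [Fintype ι] {n : ℕ} (hn : 4 ≤ n)
    (hι : n + 2 ≤ Fintype.card ι) {e : Finset ι → ι → X}
    (he : ∀ A, #A = n → IsDualSystem c A R (e A)) (f : Dual ℝ X) :
    ∃ A : Finset ι, #A = n ∧ ∀ i ∈ A, IsIsolatedOn c (LinearMap.ker f) (2 * R) i := by
  classical
  have hbad : #{i | ¬ IsIsolatedOn c (LinearMap.ker f) (2 * R) i} ≤ 2 := by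
    refine card_le_two_of_dominatesExcept (F := fun A k => |f (e A k)|) hn (by omega)
      fun i hi => ?_
    simp only [mem_filter_univ, IsIsolatedOn, not_forall] at hi
    obtain ⟨j, hji, hj⟩ := hi
    refine ⟨j, fun A hA hiA hjA k hkA hki hkj => ?_⟩
    by_contra! hle
    exact hj ((he A hA).exists_mem_ker_of_abs_le f hiA hjA hkA hji hki hkj hle)
  have hgood : n ≤ #{i | IsIsolatedOn c (LinearMap.ker f) (2 * R) i} := by
    have := card_filter_add_card_filter_not (s := univ)
      fun i => IsIsolatedOn c (LinearMap.ker f) (2 * R) i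
    rw [card_univ] at this
    omega
  obtain ⟨A, hA, hcard⟩ := exists_subset_card_eq hgood
  exact ⟨A, hcard, fun i hi => (mem_filter_univ i).1 (hA hi)⟩

end DualSystem

theorem exists_dual_ker_eq {K V : Type*} [Field K] [AddCommGroup V] [Module K V]
    {Y : Submodule K V} (hY : finrank K Y + 1 = finrank K V) :
    ∃ f : Dual K V, LinearMap.ker f = Y := by
  have : FiniteDimensional K V := Module.finite_of_finrank_pos (by omega)
  have hquot : finrank K (V ⧸ Y) = finrank K K := by
    have := Y.finrank_quotient_add_finrank
    rw [finrank_self]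
    omega
  exact ⟨LinearEquiv.ofFinrankEq (V ⧸ Y) K hquot ∘ₗ Y.mkQ, by
    rw [LinearEquiv.ker_comp, Submodule.ker_mkQ]⟩

theorem exists_ne_zero_apply_eq_zero_of_isProj_ker {K V F : Type*} [Field K] [AddCommGroup V]
    [Module K V] [FunLike F V V] [LinearMapClass F K V V] {f : Dual K V} (hf : f ≠ 0) {P : F}
    (hP : LinearMap.IsProj (LinearMap.ker f) P) : ∃ x ≠ 0, P x = 0 := by
  have hcompl : IsCompl (LinearMap.ker f) (LinearMap.ker (P : V →ₗ[K] V)) :=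
    LinearMap.IsProj.isCompl ⟨hP.map_mem, hP.map_id⟩
  have hker : LinearMap.ker (P : V →ₗ[K] V) ≠ ⊥ := fun h =>
    hf (LinearMap.ker_eq_top.1 (eq_top_of_isCompl_bot (h ▸ hcompl)))
  obtain ⟨x, hx, hx_ne⟩ := Submodule.exists_mem_ne_zero_of_ne_bot hker
  exact ⟨x, hx_ne, hx⟩

theorem one_add_sq_lt_opNorm_of_isProj_ker {X ι : Type*} [SeminormedAddCommGroup X]
    [NormedSpace ℝ X] [Fintype ι] {c : ι → Dual ℝ X} {n p : ℕ} (hn : 4 ≤ n)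
    (hnι : n + 2 ≤ Fintype.card ι) (hιp : Fintype.card ι ≤ p + 2)
    (hc : IsPowerSumNorm c (p + 2)) {R : ℝ} (hR : 0 ≤ R) {e : Finset ι → ι → X}
    (he : ∀ A, #A = n → IsDualSystem c A R (e A)) {f : Dual ℝ X} (hf : f ≠ 0) {P : X →L[ℝ] X}
    (hP : LinearMap.IsProj (LinearMap.ker f) P) {τ : ℝ} (hτ₀ : 0 < τ) (hτ₁ : τ ≤ 1)
    (hτ : τ * (n * polarizationConst (Fintype.card ι) p (2 * R) * R) < 1) :
    1 + τ ^ 2 < ‖P‖ := by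
  by_contra! hPτ
  obtain ⟨A, hA, hisolated⟩ := exists_finset_forall_isIsolatedOn_ker hn hnι he f
  obtain ⟨x, hx, hPx⟩ := exists_ne_zero_apply_eq_zero_of_isProj_ker hf hP
  have hcx : LinearMap.pi c x ≠ 0 := fun hcx => hx <| by
    rw [← (he A hA).sum_smul x]
    exact sum_eq_zero fun k _ => by rw [show c k x = 0 from congrFun hcx k, zero_smul]
  set z := ‖LinearMap.pi c x‖⁻¹ • x with hz
  have hPz : P z = 0 := by rw [hz, map_smul, hPx, smul_zero]
  have hz_norm : ‖LinearMap.pi c z‖ = 1 := by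
    rw [hz, map_smul]
    exact norm_smul_inv_norm hcx
  have hz_coord (l : ι) : |c l z| ≤ 1 := (norm_le_pi_norm (LinearMap.pi c z) l).trans_eq hz_norm
  have horth (y : X) (hy : y ∈ LinearMap.ker f) : BirkhoffOrthogonalUpTo (1 + τ ^ 2) y z :=
    birkhoffOrthogonalUpTo_of_opNorm_le hPτ (hP.map_id y hy) hPz
  have : Nontrivial ι := Fintype.one_lt_card_iff_nontrivial.1 (by omega)
  have hsmall (i : ι) (hi : i ∈ A) : |c i z| ≤ τ * polarizationConst (Fintype.card ι) p (2 * R) :=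
    hc.abs_apply_le_of_isIsolatedOn hιp (by positivity) hz_coord hτ₀ hτ₁ horth (hisolated i hi)
  have hz_le (l : ι) := (he A hA).abs_apply_le_of_forall_mem hsmall l
  rw [hA] at hz_le
  have hnonneg := (abs_nonneg _).trans (hz_le (Classical.arbitrary ι))
  have hz_norm_le : ‖LinearMap.pi c z‖ ≤ _ := (pi_norm_le_iff_of_nonneg hnonneg).2 hz_le
  rw [hz_norm] at hz_norm_le
  linarith

section SampleSpace

theorem isPowerSumNorm_piLp {ι : Type*} [Fintype ι] {q : ℕ} (hq : Even q)
    [Fact (1 ≤ (q : ENNReal))] (V : Submodule ℝ (PiLp q fun _ : ι => ℝ)) :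
    IsPowerSumNorm (fun i => PiLp.projₗ q (fun _ => ℝ) i ∘ₗ V.subtype) q := fun x => by
  have hq₀ : 1 ≤ q := by exact_mod_cast (Fact.out : 1 ≤ (q : ENNReal))
  rw [Submodule.coe_norm, PiLp.norm_eq_of_nat q rfl, ← Real.rpow_natCast, ← Real.rpow_mul
    (by positivity), one_div, inv_mul_cancel₀ (by positivity), Real.rpow_one]
  simp [hq.pow_abs]

/-- The functional evaluating a polynomial of degree less than `n` at the integer node `i`. -/
noncomputable def evalNode (n : ℕ) {m : ℕ} (i : Fin m) : Dual ℝ (Polynomial.degreeLT ℝ n) :=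
  Polynomial.leval (i : ℝ) ∘ₗ (Polynomial.degreeLT ℝ n).subtype

/-- The values at the nodes `0, …, m - 1` of a polynomial of degree less than `n`, as a vector of
`ℓ^q`. -/
noncomputable def sampleMap (n m q : ℕ) :
    Polynomial.degreeLT ℝ n →ₗ[ℝ] PiLp q fun _ : Fin m => ℝ :=
  (WithLp.linearEquiv q ℝ (Fin m → ℝ)).symm.toLinearMap ∘ₗ LinearMap.pi (evalNode n)

variable {n m q : ℕ}

theorem injOn_natCast_fin (s : Set (Fin m)) : s.InjOn fun i : Fin m => (i : ℝ) :=
  (Nat.cast_injective.comp Fin.val_injective).injOn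

theorem sampleMap_injective (hnm : n ≤ m) : Function.Injective (sampleMap n m q) := by
  rw [← LinearMap.ker_eq_bot, LinearMap.ker_eq_bot']
  refine fun P hP => Subtype.ext ?_
  refine Polynomial.eq_zero_of_degree_lt_of_eval_index_eq_zero univ (injOn_natCast_fin (m := m) _)
    ((Polynomial.mem_degreeLT.1 P.2).trans_le ?_) fun i _ => congrFun (congrArg WithLp.ofLp hP) i
  rw [card_univ, Fintype.card_fin]
  exact_mod_cast hnm

/-- The space of polynomials of degree less than `n`, normed by the `ℓ^q` norm of their values at
the nodes `0, …, m - 1`. -/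
noncomputable abbrev SampleSpace (n m q : ℕ) : Submodule ℝ (PiLp q fun _ : Fin m => ℝ) :=
  LinearMap.range (sampleMap n m q)

theorem finrank_sampleSpace (hnm : n ≤ m) : finrank ℝ (SampleSpace n m q) = n := by
  rw [LinearMap.finrank_range_of_inj (sampleMap_injective hnm),
    (Polynomial.degreeLTEquiv ℝ n).finrank_eq, finrank_fin_fun]

theorem abs_eval_lagrange_basis_le (A : Finset (Fin m)) (k l : Fin m) :
    |(Lagrange.basis A (fun i : Fin m => (i : ℝ)) k).eval (l : ℝ)| ≤ m ^ #A := by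
  have hm : (1 : ℝ) ≤ m := by exact_mod_cast k.pos
  have hfactor (j : Fin m) (hj : j ∈ A.erase k) :
      |(Lagrange.basisDivisor (k : ℝ) (j : ℝ)).eval (l : ℝ)| ≤ m := by
    have hdenom : (1 : ℝ) ≤ |(k : ℝ) - j| := by
      have : (1 : ℤ) ≤ |(k : ℤ) - j| := Int.one_le_abs (by grind)
      exact_mod_cast this
    have hnum : |(l : ℝ) - j| ≤ m := by
      have : |(l : ℤ) - j| ≤ m := abs_le.2 (by omega)
      exact_mod_cast this
    calc |(Lagrange.basisDivisor (k : ℝ) (j : ℝ)).eval (l : ℝ)|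
        = |(k : ℝ) - j|⁻¹ * |(l : ℝ) - j| := by simp [Lagrange.basisDivisor, abs_mul, abs_inv]
      _ ≤ 1 * m := by
          gcongr
          exact inv_le_one_of_one_le₀ hdenom
      _ = m := one_mul _
  calc |(Lagrange.basis A (fun i : Fin m => (i : ℝ)) k).eval (l : ℝ)|
      = ∏ j ∈ A.erase k, |(Lagrange.basisDivisor (k : ℝ) (j : ℝ)).eval (l : ℝ)| := by
        rw [Lagrange.basis, Polynomial.eval_prod, abs_prod]
    _ ≤ ∏ _j ∈ A.erase k, (m : ℝ) := prod_le_prod (fun _ _ => abs_nonneg _) hfactor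
    _ = (m : ℝ) ^ #(A.erase k) := prod_const _
    _ ≤ (m : ℝ) ^ #A := pow_le_pow_right₀ hm (card_le_card (erase_subset _ _))

theorem exists_isDualSystem_evalNode {A : Finset (Fin m)} (hA : #A = n) :
    ∃ e, IsDualSystem (evalNode n) A ((m : ℝ) ^ n) e := by
  subst hA
  set v : Fin m → ℝ := fun i => (i : ℝ)
  have hinj : Set.InjOn v A := injOn_natCast_fin _
  refine ⟨fun k => ⟨Lagrange.interpolate A v (Pi.single k 1),
    Polynomial.mem_degreeLT.2 (Lagrange.degree_interpolate_lt _ hinj)⟩, ?_⟩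
  have hbasis (k : Fin m) (hk : k ∈ A) :
      Lagrange.interpolate A v (Pi.single k 1) = Lagrange.basis A v k := by
    simp [Lagrange.interpolate_apply, Pi.single_apply, hk]
  constructor
  · intro k hk
    exact (Lagrange.eval_interpolate_at_node _ hinj hk).trans (Pi.single_eq_same k 1)
  · intro k _ l hl hlk
    exact (Lagrange.eval_interpolate_at_node _ hinj hl).trans (Pi.single_eq_of_ne hlk 1)
  · refine fun P => Subtype.ext ?_
    have hP := Lagrange.eq_interpolate hinj (Polynomial.mem_degreeLT.1 P.2)
    conv_rhs => rw [hP, Lagrange.interpolate_apply]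
    simp only [AddSubmonoidClass.coe_finsetSum, Submodule.coe_smul]
    exact sum_congr rfl fun k hk => by rw [hbasis k hk, Polynomial.smul_eq_C_mul]; rfl
  · intro k hk l
    simpa [evalNode, hbasis k hk] using abs_eval_lagrange_basis_le A k l

theorem exists_isDualSystem_sampleSpace (hnm : n ≤ m) {A : Finset (Fin m)} (hA : #A = n) :
    ∃ e, IsDualSystem (fun i => PiLp.projₗ q (fun _ => ℝ) i ∘ₗ (SampleSpace n m q).subtype) A
      ((m : ℝ) ^ n) e := by
  obtain ⟨e, he⟩ := exists_isDualSystem_evalNode hA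
  exact ⟨_, he.map (LinearEquiv.ofInjective _ (sampleMap_injective hnm)) fun _ _ => rfl⟩

end SampleSpace

theorem polarizationConst_le_pow {m p a : ℕ} {K R : ℝ} (hK : 2 ≤ K) (hm : m ≤ K)
    (hp : p + 2 ≤ K) (hR : 0 ≤ R) (hRK : (p + 1) * R + 1 ≤ K ^ a) :
    polarizationConst m p R ≤ K ^ (p + 3 + a * (p + 2)) := by
  calc polarizationConst m p R ≤ K ^ (p + 1) * (K * (K * (K ^ a) ^ (p + 2))) := by
        rw [polarizationConst]
        gcongr
    _ = K ^ (p + 3 + a * (p + 2)) := by rw [← pow_mul]; ring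

theorem mul_polarizationConst_mul_lt_pow (n : ℕ) :
    n * polarizationConst (n + 2) (2 * n + 2) (2 * ((n + 2 : ℕ) : ℝ) ^ n) * ((n + 2 : ℕ) : ℝ) ^ n
      < (2 * ((n : ℝ) + 3) ^ 2) ^ (50 * (n + 3) ^ 2) := by
  set K : ℝ := 2 * ((n : ℝ) + 3) ^ 2 with hK
  set R : ℝ := ((n + 2 : ℕ) : ℝ) ^ n
  have hn : (0 : ℝ) ≤ n := n.cast_nonneg
  have hK_two : 2 ≤ K := by nlinarith [hn, hK]
  have hnK : (n : ℝ) ≤ K := by nlinarith [hn, hK]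
  have hnK_two : ((n + 2 : ℕ) : ℝ) ≤ K := by push_cast; nlinarith [hn, hK]
  have hpK : ((2 * n + 2 : ℕ) : ℝ) + 2 ≤ K := by push_cast; nlinarith [hn, hK]
  have hR_one : 1 ≤ R := one_le_pow₀ (by push_cast; linarith)
  have hRK : R ≤ K ^ n := pow_le_pow_left₀ (by positivity) hnK_two n
  have hbase : ((2 * n + 2 : ℕ) + 1) * (2 * R) + 1 ≤ K ^ (n + 1) := by
    calc ((2 * n + 2 : ℕ) + 1) * (2 * R) + 1 ≤ (4 * n + 7) * R := by push_cast; linarith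
      _ ≤ K * K ^ n := by gcongr; nlinarith
      _ = K ^ (n + 1) := (pow_succ' K n).symm
  have hconst := polarizationConst_le_pow hK_two hnK_two hpK (by positivity) hbase
  have hexponent : 1 + (2 * n + 2 + 3 + (n + 1) * (2 * n + 2 + 2)) + n < 50 * (n + 3) ^ 2 := by
    nlinarith
  calc n * polarizationConst (n + 2) (2 * n + 2) (2 * R) * R
      ≤ K * K ^ (2 * n + 2 + 3 + (n + 1) * (2 * n + 2 + 2)) * K ^ n := by
        have hconst_nonneg := polarizationConst_nonneg (n + 2) (2 * n + 2)
          (by positivity : 0 ≤ 2 * R)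
        gcongr
    _ = K ^ (1 + (2 * n + 2 + 3 + (n + 1) * (2 * n + 2 + 2)) + n) := by
        rw [pow_add K (1 + _), pow_add K 1, pow_one]
    _ < K ^ (50 * (n + 3) ^ 2) := pow_lt_pow_right₀ (by linarith) hexponent

theorem inv_pow_hundred_mul_eq_sq {K : Type*} [DivisionMonoid K] (x : K) (a : ℕ) :
    (x ^ (100 * a))⁻¹ = ((x ^ (50 * a))⁻¹) ^ 2 := by
  rw [inv_pow, ← pow_mul]
  congr 2
  ring

/-- Corollary 1.2: for every `n ≥ 4` there is an `n`-dimensional normed space all of whose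
projections onto hyperplanes have norm greater than `1 + (2(n+3)²)^{-100(n+3)²}`. -/
theorem exists_space_with_large_hyperplane_projections (n : ℕ) (hn : 4 ≤ n) :
    ∃ (X : Type) (g : NormedAddCommGroup X)
      (s : @NormedSpace ℝ X _ g.toSeminormedAddCommGroup),
      @NoAlmostMinimalHyperplaneProjection n X g s := by
  have : Fact (1 ≤ ((2 * n + 2 + 2 : ℕ) : ENNReal)) := ⟨by exact_mod_cast Nat.le_add_left 1 _⟩
  have hrank : finrank ℝ (SampleSpace n (n + 2) (2 * n + 2 + 2)) = n :=
    finrank_sampleSpace (Nat.le_add_right n 2)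
  refine ⟨SampleSpace n (n + 2) (2 * n + 2 + 2), inferInstance, inferInstance, hrank,
    fun Y hY P hPY hP => ?_⟩
  obtain ⟨f, rfl⟩ := exists_dual_ker_eq (show finrank ℝ Y + 1 = finrank ℝ _ by omega)
  have hf : f ≠ 0 := by
    rintro rfl
    rw [LinearMap.ker_zero, finrank_top] at hY
    omega
  have he (A : Finset (Fin (n + 2))) (hA : #A = n) := exists_isDualSystem_sampleSpace
    (q := 2 * n + 2 + 2) (Nat.le_add_right n 2) hA
  choose! e he using he
  rw [inv_pow_hundred_mul_eq_sq]
  have hK : 1 ≤ (2 * ((n : ℝ) + 3) ^ 2) ^ (50 * (n + 3) ^ 2) :=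
    one_le_pow₀ (by nlinarith [n.cast_nonneg (α := ℝ)])
  exact one_add_sq_lt_opNorm_of_isProj_ker hn (by rw [Fintype.card_fin])
    (by rw [Fintype.card_fin]; omega) (isPowerSumNorm_piLp ⟨n + 2, by ring⟩ _) (by positivity)
    he hf ⟨hPY, hP⟩ (by positivity) (inv_le_one_of_one_le₀ hK)
    ((inv_mul_lt_one₀ (by positivity)).2 (by simpa using mul_polarizationConst_mul_lt_pow n))
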